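/- arXiv:1209.2358 — 2 statements merged into one kernel-verified Lean document; each statement's English description precedes it below -/
import Mathlib

section
/- The projective modular group PSL(2,Z) is isomorphic to the free product Z/2 * Z/3. -/
/-!
Left multiplication by `S = !![0, -1; 1, 0]` and `U = !![1, -1; 1, 0]` sends the first column
`(x, y)` of a matrix to `(-y, x)` and `(x - y, x)`. In `PSL(2,ℤ)` the classes of `S` and `U` have
orders dividing `2` and `3`, so they define a homomorphism `ℤ/2 * ℤ/3 → PSL(2,ℤ)`.
It is surjective because `S` and `T = U * S⁻¹` generate `SL(2,ℤ)`.

Injectivity is the ping-pong lemma for the action of `PSL(2,ℤ)` on itself by left multiplication.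
The sign of `x * y` is well defined on `PSL(2,ℤ)`; `S` turns `x * y > 0` into `x * y < 0`, while
`U` and `U²` turn `x * y < 0` into `x * y > 0`, since `(x - y) * x = x² - x * y` and
`-y * (x - y) = y² - x * y`. The lemma applies as `ℤ/3` has at least three elements.
-/

open Matrix

instance : Fact (Even (Fintype.card (Fin 2))) := ⟨by simp⟩

/-- The subgroup `{I, -I}` of `SL(2,ℤ)`. -/
def plusMinusOne : Subgroup (SpecialLinearGroup (Fin 2) ℤ) :=
  Subgroup.zpowers (-1)

instance : plusMinusOne.Normal := by
  constructor
  intro x hx g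
  obtain ⟨k, rfl⟩ := hx
  have h : g * (-1 : SpecialLinearGroup (Fin 2) ℤ) ^ k * g⁻¹
      = (-1) ^ k := by
    have hc : Commute g ((-1 : SpecialLinearGroup (Fin 2) ℤ) ^ k) := by
      apply Commute.zpow_right
      ext i j
      simp [SpecialLinearGroup.coe_mul]
    rw [hc.eq, mul_assoc, mul_inv_cancel, mul_one]
  rw [h]
  exact ⟨k, rfl⟩

/-- The projective modular group `PSL(2,ℤ) = SL(2,ℤ)/{±I}`. -/
def PSL2Z : Type := SpecialLinearGroup (Fin 2) ℤ ⧸ plusMinusOne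

noncomputable instance : Group PSL2Z := by unfold PSL2Z; infer_instance

namespace PSL2ZProof

open Monoid

/-- The quotient `SL(2,ℤ)/{±I}` with its reducible quotient group structure. -/
abbrev Q : Type := SpecialLinearGroup (Fin 2) ℤ ⧸ plusMinusOne

/-- The group structure on `PSL2Z` is the quotient one. -/
noncomputable def toPSL2Z : Q ≃* PSL2Z where
  toEquiv := Equiv.refl _
  map_mul' _ _ := rfl

/-- An order three element of `PSL(2,ℤ)`, given as a matrix with `U ^ 3 = -1`. -/
def U : SpecialLinearGroup (Fin 2) ℤ := ⟨!![1, -1; 1, 0], by simp [Matrix.det_fin_two]⟩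

lemma mem_plusMinusOne {g : SpecialLinearGroup (Fin 2) ℤ} (hg : g ∈ plusMinusOne) :
    g = 1 ∨ g = -1 := by
  obtain ⟨k, rfl⟩ := hg
  rcases Int.even_or_odd k with h | h
  · exact Or.inl h.neg_one_zpow
  · exact Or.inr h.neg_one_zpow

/-- The product of the two entries of the first column, as a function on `PSL(2,ℤ)`. -/
def colProd : Q → ℤ :=
  Quotient.lift (fun g : SpecialLinearGroup (Fin 2) ℤ => g 0 0 * g 1 0) (by
    intro a b hab
    have h : a⁻¹ * b ∈ plusMinusOne := QuotientGroup.leftRel_apply.mp hab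
    rcases mem_plusMinusOne h with h | h
    · rw [inv_mul_eq_one.mp h]
    · have hb : b = -a := by rw [inv_mul_eq_iff_eq_mul.mp h, mul_neg_one]
      simp [hb])

lemma colProd_mk (g : SpecialLinearGroup (Fin 2) ℤ) :
    colProd (g : Q) = g 0 0 * g 1 0 := rfl

lemma mk_neg_one : ((-1 : SpecialLinearGroup (Fin 2) ℤ) : Q) = 1 :=
  (QuotientGroup.eq_one_iff _).mpr (Subgroup.mem_zpowers _)

lemma S_sq : (ModularGroup.S : Q) ^ 2 = 1 := by
  rw [← QuotientGroup.mk_pow, ← mk_neg_one]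
  congr 1
  decide

lemma U_cube : (U : Q) ^ 3 = 1 := by
  rw [← QuotientGroup.mk_pow, ← mk_neg_one]
  congr 1
  decide

/-- The homomorphism `ℤ/n → G` sending the generator to a given `g` with `g ^ n = 1`. -/
def zmodHom {G : Type*} [Group G] (n : ℕ) (g : G) (hg : g ^ n = 1) :
    Multiplicative (ZMod n) →* G :=
  AddMonoidHom.toMultiplicativeLeft
    (ZMod.lift n ⟨zmultiplesHom (Additive G) (Additive.ofMul g), by
      simp [← ofMul_pow, hg]⟩)

lemma zmodHom_natCast {G : Type*} [Group G] (n : ℕ) (g : G) (hg : g ^ n = 1) (k : ℕ) :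
    zmodHom n g hg (Multiplicative.ofAdd (k : ZMod n)) = g ^ k := by
  have h := ZMod.lift_coe n ⟨zmultiplesHom (Additive G) (Additive.ofMul g), by
      simp [← ofMul_pow, hg]⟩ (k : ℤ)
  rw [Int.cast_natCast] at h
  change Additive.toMul (ZMod.lift n _ (k : ZMod n)) = _
  rw [h]
  simp

/-- The orders of the two factors. Indexing by `n b` keeps the family `ZMod (n b)` uniform, so its
instances need no case analysis. -/
abbrev n (b : Bool) : ℕ := cond b 3 2

/-- The generators of the two factors: `S` for `false` and `U` for `true`. -/
def gen (b : Bool) : Q := cond b (U : Q) (ModularGroup.S : Q)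

lemma gen_pow (b : Bool) : gen b ^ n b = 1 := by
  cases b
  · exact S_sq
  · exact U_cube

/-- The two factor homomorphisms into `SL(2,ℤ)/{±I}`. -/
def F (b : Bool) : Multiplicative (ZMod (n b)) →* Q := zmodHom (n b) (gen b) (gen_pow b)

/-- The ping-pong sets: `x * y < 0` for `false` and `x * y > 0` for `true`, where `(x, y)` is the
first column. -/
def X (b : Bool) : Set Q := {q | cond b (0 < colProd q) (colProd q < 0)}

lemma colProd_mul (A g : SpecialLinearGroup (Fin 2) ℤ) :
    colProd ((A : Q) * (g : Q)) =
      (A 0 0 * g 0 0 + A 0 1 * g 1 0) * (A 1 0 * g 0 0 + A 1 1 * g 1 0) := by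
  change (A.1 * g.1) 0 0 * (A.1 * g.1) 1 0 = _
  simp only [Matrix.mul_apply, Fin.sum_univ_two]

lemma colProd_S_mul (q : Q) : colProd ((ModularGroup.S : Q) * q) = -colProd q := by
  induction q using QuotientGroup.induction_on with
  | H g =>
    rw [colProd_mul, colProd_mk]
    change (0 * g 0 0 + -1 * g 1 0) * (1 * g 0 0 + 0 * g 1 0) = _
    ring

lemma colProd_U_mul (q : Q) (hq : colProd q < 0) : 0 < colProd ((U : Q) * q) := by
  induction q using QuotientGroup.induction_on with
  | H g =>
    rw [colProd_mk] at hq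
    rw [colProd_mul]
    change 0 < (1 * g 0 0 + -1 * g 1 0) * (1 * g 0 0 + 0 * g 1 0)
    nlinarith [sq_nonneg (g 0 0)]

lemma colProd_U_sq_mul (q : Q) (hq : colProd q < 0) : 0 < colProd ((U : Q) ^ 2 * q) := by
  induction q using QuotientGroup.induction_on with
  | H g =>
    rw [colProd_mk] at hq
    have h00 : (U ^ 2) 0 0 = 0 := by decide
    have h01 : (U ^ 2) 0 1 = -1 := by decide
    have h10 : (U ^ 2) 1 0 = 1 := by decide
    have h11 : (U ^ 2) 1 1 = -1 := by decide
    rw [← QuotientGroup.mk_pow, colProd_mul, h00, h01, h10, h11]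
    change 0 < (0 * g 0 0 + -1 * g 1 0) * (1 * g 0 0 + -1 * g 1 0)
    nlinarith [sq_nonneg (g 1 0)]

lemma injective_coprodI : Function.Injective (CoprodI.lift F) := by
  refine CoprodI.lift_injective_of_ping_pong F ?_ X ?_ ?_ ?_
  · exact Or.inr ⟨true, by simp [n]⟩
  · rintro (_ | _)
    · let g : SpecialLinearGroup (Fin 2) ℤ := ⟨!![1, 0; -1, 1], by simp [Matrix.det_fin_two]⟩
      exact ⟨(g : Q), show (1 : ℤ) * -1 < 0 by norm_num⟩
    · let g : SpecialLinearGroup (Fin 2) ℤ := ⟨!![1, 0; 1, 1], by simp [Matrix.det_fin_two]⟩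
      exact ⟨(g : Q), show (0 : ℤ) < 1 * 1 by norm_num⟩
  · rintro (_ | _) (_ | _) hij
    · exact absurd rfl hij
    · exact Set.disjoint_left.mpr fun q (h : colProd q < 0) (h' : 0 < colProd q) => by omega
    · exact Set.disjoint_left.mpr fun q (h : 0 < colProd q) (h' : colProd q < 0) => by omega
    · exact absurd rfl hij
  · rintro i j hij h hh
    -- Every element of `ZMod (n i)` is the cast of some `k < n i`.
    obtain ⟨k, hk, rfl⟩ : ∃ k < n i, h = Multiplicative.ofAdd ((k : ℕ) : ZMod (n i)) := by
      have : NeZero (n i) := ⟨by cases i <;> decide⟩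
      exact ⟨(Multiplicative.toAdd h).val, ZMod.val_lt _, by simp⟩
    have hk0 : k ≠ 0 := by
      rintro rfl
      exact hh (by simp)
    rw [F, zmodHom_natCast]
    rintro _ ⟨q, hq, rfl⟩
    cases i <;> cases j
    · exact absurd rfl hij
    · obtain rfl : k = 1 := by simp only [n, cond] at hk; omega
      have hq' : 0 < colProd q := hq
      change colProd ((ModularGroup.S : Q) ^ 1 * q) < 0
      rw [pow_one, colProd_S_mul]
      omega
    · obtain rfl | rfl : k = 1 ∨ k = 2 := by simp only [n, cond] at hk; omega
      · change 0 < colProd ((U : Q) ^ 1 * q)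
        rw [pow_one]
        exact colProd_U_mul q hq
      · exact colProd_U_sq_mul q hq
    · exact absurd rfl hij

/-- The homomorphism `ℤ/2 * ℤ/3 → SL(2,ℤ)/{±I}` given by `S` and `U`. -/
def Φ : Monoid.Coprod (Multiplicative (ZMod 2)) (Multiplicative (ZMod 3)) →* Q :=
  Coprod.lift (F false) (F true)

/-- `Φ` factors through the isomorphism of the binary free product with the free product of the
`Bool`-indexed family, whose inverse is given by the inclusions. -/
lemma injective_Φ : Function.Injective Φ := by
  let a : Monoid.Coprod (Multiplicative (ZMod 2)) (Multiplicative (ZMod 3)) →*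
      CoprodI (fun b => Multiplicative (ZMod (n b))) :=
    Coprod.lift (CoprodI.of (M := fun b => Multiplicative (ZMod (n b))) (i := false))
      (CoprodI.of (M := fun b => Multiplicative (ZMod (n b))) (i := true))
  have hinl (x : Multiplicative (ZMod 2)) : a (Coprod.inl x) =
      CoprodI.of (M := fun b => Multiplicative (ZMod (n b))) (i := false) x :=
    Coprod.lift_apply_inl _ _ x
  have hinr (x : Multiplicative (ZMod 3)) : a (Coprod.inr x) =
      CoprodI.of (M := fun b => Multiplicative (ZMod (n b))) (i := true) x :=
    Coprod.lift_apply_inr _ _ x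
  let ι : ∀ b, Multiplicative (ZMod (n b)) →*
      Monoid.Coprod (Multiplicative (ZMod 2)) (Multiplicative (ZMod 3)) := fun b =>
    match b with
    | false => Coprod.inl
    | true => Coprod.inr
  have hleft : (CoprodI.lift ι).comp a = MonoidHom.id _ := by
    apply Coprod.hom_ext
    · refine MonoidHom.ext fun x => ?_
      exact (congrArg _ (hinl x)).trans (CoprodI.lift_of (i := false) ι x)
    · refine MonoidHom.ext fun x => ?_
      exact (congrArg _ (hinr x)).trans (CoprodI.lift_of (i := true) ι x)
  have hcomp : (CoprodI.lift F).comp a = Φ := by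
    apply Coprod.hom_ext
    · refine MonoidHom.ext fun x => ?_
      exact ((congrArg _ (hinl x)).trans
        (CoprodI.lift_of (i := false) F x)).trans (Coprod.lift_apply_inl (F false) (F true) x).symm
    · refine MonoidHom.ext fun x => ?_
      exact ((congrArg _ (hinr x)).trans
        (CoprodI.lift_of (i := true) F x)).trans (Coprod.lift_apply_inr (F false) (F true) x).symm
  have ha : Function.Injective a :=
    Function.LeftInverse.injective (g := CoprodI.lift ι) fun x => DFunLike.congr_fun hleft x
  rw [← hcomp]
  exact injective_coprodI.comp ha

lemma surjective_Φ : Function.Surjective Φ := by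
  have hgen (b : Bool) : gen b = F b (Multiplicative.ofAdd ((1 : ℕ) : ZMod (n b))) := by
    rw [F, zmodHom_natCast, pow_one]
  have hS : (ModularGroup.S : Q) ∈ Φ.range :=
    ⟨Coprod.inl (N := Multiplicative (ZMod 3)) (Multiplicative.ofAdd ((1 : ℕ) : ZMod 2)),
      (Coprod.lift_apply_inl (F false) (F true) _).trans (hgen false).symm⟩
  have hU : (U : Q) ∈ Φ.range :=
    ⟨Coprod.inr (M := Multiplicative (ZMod 2)) (Multiplicative.ofAdd ((1 : ℕ) : ZMod 3)),
      (Coprod.lift_apply_inr (F false) (F true) _).trans (hgen true).symm⟩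
  have hT : ModularGroup.T = U * ModularGroup.S⁻¹ := by
    rw [eq_mul_inv_iff_mul_eq]
    decide
  have htop : (⊤ : Subgroup (SpecialLinearGroup (Fin 2) ℤ)) ≤
      Φ.range.comap (QuotientGroup.mk' plusMinusOne) := by
    rw [← SpecialLinearGroup.SL2Z_generators, Subgroup.closure_le]
    rintro g (rfl | rfl)
    · exact hS
    · change ((ModularGroup.T : SpecialLinearGroup (Fin 2) ℤ) : Q) ∈ Φ.range
      rw [hT]
      exact mul_mem hU (inv_mem hS)
  intro q
  induction q using QuotientGroup.induction_on with
  | H g => exact htop (Subgroup.mem_top g)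

end PSL2ZProof

/-- `PSL(2,ℤ)` is isomorphic to the free product `ℤ/2 * ℤ/3`. -/
theorem psl2z_iso_coprod :
    Nonempty (PSL2Z ≃* Monoid.Coprod (Multiplicative (ZMod 2)) (Multiplicative (ZMod 3))) :=
  ⟨((MulEquiv.ofBijective PSL2ZProof.Φ
    ⟨PSL2ZProof.injective_Φ, PSL2ZProof.surjective_Φ⟩).trans PSL2ZProof.toPSL2Z).symm⟩
end

section
/- SL(2,Z) is isomorphic to the amalgamated free product Z/4 *_{Z/2} Z/6. -/
/-!
The homomorphism from the amalgam to `SL(2,ℤ)` sends the generators `a` of `ℤ/4` and `b` of `ℤ/6` to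
`S = (0 -1; 1 0)` and `B = (0 -1; 1 1)`, for which `S² = B³ = -1`. It is onto because `S` and
`T = (1 1; 0 1) = -S B` generate `SL(2,ℤ)`.

For injectivity put `z = a² = b³`, a central element with `z² = 1`. The elements `u = z a b` and
`v = z a b²` are sent to `(1 1; 0 1)` and `(1 0; 1 1)`. Every element of the amalgam has the form
`s p w q` with `s ∈ {1, z}`, `p ∈ {1, b, b²}`, `q ∈ {1, a}` and `w` a product of `u`s and `v`s, since
the set of such elements contains `1` and is stable under left multiplication by `a` and `b`
(`HasNormalForm.mul_a`, `HasNormalForm.mul_b`). The matrix of `w` has positive diagonal and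
nonnegative off-diagonal entries, which do not both vanish unless `w = 1` (`PosWord.entries`).
Comparing entries, `s p w q` is sent to the identity matrix only if `s = p = w = q = 1`
(`injective_of_generators`).
-/

/-- The two vertex groups `ℤ/6` (at `false`) and `ℤ/4` (at `true`). -/
def vertexGroup : Bool → Type := fun b => Multiplicative (ZMod (cond b 4 6))

instance (b : Bool) : Group (vertexGroup b) := by
  cases b <;> (unfold vertexGroup; infer_instance)

/-- The embedding `ℤ/2 ↪ ℤ/4` sending the generator to `2`. -/
def into4 : Multiplicative (ZMod 2) →* Multiplicative (ZMod 4) :=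
  AddMonoidHom.toMultiplicative
    (ZMod.lift 2 ⟨zmultiplesHom (ZMod 4) 2, by decide⟩)

/-- The embedding `ℤ/2 ↪ ℤ/6` sending the generator to `3`. -/
def into6 : Multiplicative (ZMod 2) →* Multiplicative (ZMod 6) :=
  AddMonoidHom.toMultiplicative
    (ZMod.lift 2 ⟨zmultiplesHom (ZMod 6) 3, by decide⟩)

/-- The amalgamation data `ℤ/4 ←↩ ℤ/2 ↪ ℤ/6`. -/
def amalgMaps : ∀ b : Bool, Multiplicative (ZMod 2) →* vertexGroup b :=
  fun b => Bool.rec into6 into4 b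

/-! ### Normal forms in a group generated by `a`, `b` with `a² = b³`, `a⁴ = 1` -/

open Matrix

/-- The matrix `(0 -1; 1 1)` of order `6`. -/
def matB : SpecialLinearGroup (Fin 2) ℤ := ⟨!![0, -1; 1, 1], by simp⟩

/-- The submonoid generated by `a² (a b)` and `a² (a b²)`, as an inductive predicate that builds
words by left multiplication. -/
inductive PosWord {G : Type*} [Group G] (a b : G) : G → Prop
  | one : PosWord a b 1
  | u (w : G) : PosWord a b w → PosWord a b (a ^ 2 * (a * b) * w)
  | v (w : G) : PosWord a b w → PosWord a b (a ^ 2 * (a * b ^ 2) * w)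

/-- `g = s p w q` with `s ∈ {1, a²}`, `p ∈ {1, b, b²}`, `w` a positive word and `q ∈ {1, a}`. -/
def HasNormalForm {G : Type*} [Group G] (a b g : G) : Prop :=
  ∃ s p w q, (s = 1 ∨ s = a ^ 2) ∧ (p = 1 ∨ p = b ∨ p = b ^ 2) ∧ PosWord a b w ∧
    (q = 1 ∨ q = a) ∧ g = s * p * w * q

section NormalForm

variable {G : Type*} [Group G] {a b g : G}

lemma HasNormalForm.mul_z (ha : a ^ 4 = 1) (h : HasNormalForm a b g) :
    HasNormalForm a b (a ^ 2 * g) := by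
  obtain ⟨s, p, w, q, hs, hp, hw, hq, rfl⟩ := h
  refine ⟨a ^ 2 * s, p, w, q, ?_, hp, hw, hq, by group⟩
  rcases hs with rfl | rfl
  · simp
  · exact Or.inl (by rw [← ha]; group)

lemma HasNormalForm.mul_b (ha : a ^ 4 = 1) (hab : a ^ 2 = b ^ 3) (h : HasNormalForm a b g) :
    HasNormalForm a b (b * g) := by
  obtain ⟨s, p, w, q, hs, hp, hw, hq, rfl⟩ := h
  have hc : b * s = s * b := by
    rcases hs with rfl | rfl
    · simp
    · rw [hab]; group
  rcases hp with rfl | rfl | rfl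
  · refine ⟨s, b, w, q, hs, by simp, hw, hq, ?_⟩
    simp [← mul_assoc, hc]
  · refine ⟨s, p ^ 2, w, q, hs, by simp, hw, hq, ?_⟩
    simp [← mul_assoc, hc, pow_two]
  · have : b * (s * b ^ 2 * w * q) = a ^ 2 * (s * 1 * w * q) := by
      have h3 : b * s * b ^ 2 = a ^ 2 * s := by
        rw [hc, mul_assoc, ← pow_succ', ← hab]
        rcases hs with rfl | rfl <;> simp
      rw [← mul_assoc, ← mul_assoc, ← mul_assoc, h3]
      simp [mul_assoc]
    rw [this]
    exact HasNormalForm.mul_z ha ⟨s, 1, w, q, hs, by simp, hw, hq, rfl⟩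

/-- In `a p w q` with `p = 1` and `w` nonempty, the leading `a` cancels against the first letter of
`w`, leaving `b` or `b²` in place of `p`; with `p ≠ 1`, the product `a p` becomes the first letter of
a longer positive word. -/
lemma HasNormalForm.mul_a (ha : a ^ 4 = 1) (h : HasNormalForm a b g) :
    HasNormalForm a b (a * g) := by
  have ha' (x : G) : a ^ 2 * (a ^ 2 * x) = x := by
    rw [← mul_assoc, ← pow_add, ha, one_mul]
  obtain ⟨s, p, w, q, hs, hp, hw, hq, rfl⟩ := h
  -- it suffices to treat `s = 1`
  suffices H : HasNormalForm a b (a * (p * w * q)) by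
    rcases hs with rfl | rfl
    · simpa using H
    · have := H.mul_z ha
      rwa [show a * (a ^ 2 * p * w * q) = a ^ 2 * (a * (p * w * q)) by group]
  rcases hp with rfl | rfl | rfl
  · cases hw with
    | one =>
      rcases hq with rfl | rfl
      · exact ⟨1, 1, 1, a, by simp, by simp, .one, by simp, by simp⟩
      · exact ⟨q ^ 2, 1, 1, 1, by simp, by simp, .one, by simp, by simp [pow_two]⟩
    | u w hw =>
      refine ⟨1, b, w, q, by simp, by simp, hw, hq, ?_⟩
      rw [show a * (1 * (a ^ 2 * (a * b) * w) * q) = a ^ 4 * b * w * q by group, ha]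
    | v w hw =>
      refine ⟨1, b ^ 2, w, q, by simp, by simp, hw, hq, ?_⟩
      rw [show a * (1 * (a ^ 2 * (a * b ^ 2) * w) * q) = a ^ 4 * b ^ 2 * w * q by group, ha]
  · refine ⟨a ^ 2, 1, _, q, by simp, by simp, .u w hw, hq, ?_⟩
    simp only [mul_assoc, one_mul, ha']
  · refine ⟨a ^ 2, 1, _, q, by simp, by simp, .v w hw, hq, ?_⟩
    simp only [mul_assoc, one_mul, ha']

lemma hasNormalForm_of_closure (ha : a ^ 4 = 1) (hab : a ^ 2 = b ^ 3)
    (hgen : Subgroup.closure {a, b} = ⊤) (g : G) : HasNormalForm a b g := by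
  have hg : g ∈ Subgroup.closure {a, b} := by rw [hgen]; trivial
  have hb : b ^ 6 = 1 := by rw [show (6 : ℕ) = 3 * 2 from rfl, pow_mul, ← hab, ← pow_mul, ha]
  have hai : a⁻¹ = a * a * a := by
    rw [inv_eq_iff_mul_eq_one, ← ha]; simp only [pow_succ, pow_zero, one_mul, mul_assoc]
  have hbi : b⁻¹ = b * b * b * b * b := by
    rw [inv_eq_iff_mul_eq_one, ← hb]; simp only [pow_succ, pow_zero, one_mul, mul_assoc]
  induction hg using Subgroup.closure_induction_left with
  | one => exact ⟨1, 1, 1, 1, by simp, by simp, .one, by simp, by simp⟩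
  | mul_left x hx y _ ih =>
    rcases hx with rfl | rfl
    · exact ih.mul_a ha
    · exact ih.mul_b ha hab
  | inv_mul_cancel x hx y _ ih =>
    rcases hx with rfl | rfl
    · rw [hai]; simp only [mul_assoc]
      exact ((ih.mul_a ha).mul_a ha).mul_a ha
    · rw [hbi]; simp only [mul_assoc]
      exact ((((ih.mul_b ha hab).mul_b ha hab).mul_b ha hab).mul_b ha hab).mul_b ha hab

/-- The two letters act as the elementary matrices `(1 1; 0 1)` and `(1 0; 1 1)`, so multiplying by
one of them adds one row of a matrix with nonnegative entries to the other. -/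
lemma PosWord.entries {F : G →* Matrix (Fin 2) (Fin 2) ℤ} (hFa : F a = !![0, -1; 1, 0])
    (hFb : F b = !![0, -1; 1, 1]) (h : PosWord a b g) :
    1 ≤ F g 0 0 ∧ 1 ≤ F g 1 1 ∧ 0 ≤ F g 0 1 ∧ 0 ≤ F g 1 0 ∧
      (g = 1 ∨ 1 ≤ F g 0 1 + F g 1 0) := by
  induction h with
  | one => simp
  | u w _ ih =>
    have hu : F (a ^ 2 * (a * b)) = !![1, 1; 0, 1] := by
      simp only [map_mul, map_pow, hFa, hFb]; decide
    rw [map_mul F (a ^ 2 * (a * b)) w, hu]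
    simp [mul_apply, Fin.sum_univ_two]
    omega
  | v w _ ih =>
    have hv : F (a ^ 2 * (a * b ^ 2)) = !![1, 0; 1, 1] := by
      simp only [map_mul, map_pow, hFa, hFb]; decide
    rw [map_mul F (a ^ 2 * (a * b ^ 2)) w, hv]
    simp [mul_apply, Fin.sum_univ_two]
    omega

/-- In `s p w q` each factor `s`, `p`, `q` has an explicit matrix. Unless all three are `1`, the
equation `F (s p w q) = 1` forces a diagonal entry of `F w` to be nonpositive or an off-diagonal one
to be negative; if they are, `F w` is diagonal. -/
lemma injective_of_generators (ha : a ^ 4 = 1) (hab : a ^ 2 = b ^ 3)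
    (hgen : Subgroup.closure {a, b} = ⊤) (F : G →* Matrix (Fin 2) (Fin 2) ℤ)
    (hFa : F a = !![0, -1; 1, 0]) (hFb : F b = !![0, -1; 1, 1]) : Function.Injective F := by
  rw [injective_iff_map_eq_one]
  intro g hg
  obtain ⟨s, p, w, q, hs, hp, hw, hq, rfl⟩ := hasNormalForm_of_closure ha hab hgen g
  obtain ⟨h1, h2, h3, h4, h5⟩ := hw.entries hFa hFb
  have hs2 : F (a ^ 2) = !![-1, 0; 0, -1] := by rw [map_pow, hFa]; decide
  have hb2 : F (b ^ 2) = !![-1, -1; 1, 0] := by rw [map_pow, hFb]; decide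
  have e00 := congrFun (congrFun hg 0) 0
  have e01 := congrFun (congrFun hg 0) 1
  have e10 := congrFun (congrFun hg 1) 0
  have e11 := congrFun (congrFun hg 1) 1
  simp only [map_mul] at e00 e01 e10 e11
  have hw1 : (s = 1 ∧ p = 1 ∧ q = 1) ∧ ¬ 1 ≤ F w 0 1 + F w 1 0 := by
    rcases hs with rfl | rfl <;> rcases hp with rfl | rfl | rfl <;> rcases hq with rfl | rfl <;>
    simp only [map_one, hs2, hFa, hFb, hb2] at e00 e01 e10 e11 <;>
    simp [vecMul, dotProduct, mul_apply, Fin.sum_univ_two] at e00 e01 e10 e11 <;>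
    first
      | (exfalso; omega)
      | exact ⟨⟨rfl, rfl, rfl⟩, by omega⟩
  obtain ⟨⟨rfl, rfl, rfl⟩, hn⟩ := hw1
  simp [h5.resolve_right hn]

end NormalForm

/-! ### The homomorphism from the amalgam -/

section Amalgam

/-- The homomorphism `ℤ/n → G` sending the generator to `g`, where `g ^ n = 1`. -/
def cyclicHom {G : Type*} [Group G] (n : ℕ) (g : G) (h : g ^ n = 1) :
    Multiplicative (ZMod n) →* G :=
  AddMonoidHom.toMultiplicativeLeft
    (ZMod.lift n ⟨zmultiplesHom (Additive G) (Additive.ofMul g), by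
      simp [← ofMul_pow, h]⟩)

@[simp] lemma cyclicHom_one {G : Type*} [Group G] (n : ℕ) (g : G) (h : g ^ n = 1) :
    cyclicHom n g h (Multiplicative.ofAdd 1) = g := by
  have := ZMod.lift_coe n ⟨zmultiplesHom (Additive G) (Additive.ofMul g), by
      simp [← ofMul_pow, h]⟩ 1
  simp only [Int.cast_one] at this
  simp [cyclicHom, this]

/-- The maps `ℤ/6 → SL(2,ℤ)` and `ℤ/4 → SL(2,ℤ)` with images generated by `B` and `S`. -/
def vertexHom : ∀ b : Bool, vertexGroup b →* SpecialLinearGroup (Fin 2) ℤ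
  | false => cyclicHom 6 matB (by decide)
  | true => cyclicHom 4 ModularGroup.S (by decide)

/-- The map from the amalgam to `SL(2,ℤ)`; the common subgroup `ℤ/2` goes to `{±1}`. -/
def amalgHom : Monoid.PushoutI amalgMaps →* SpecialLinearGroup (Fin 2) ℤ :=
  Monoid.PushoutI.lift vertexHom ((vertexHom true).comp (amalgMaps true)) (by
    rintro (_ | _)
    · refine MonoidHom.ext fun x => ?_
      revert x
      decide
    · rfl)

/-- The generator of `ℤ/4` in the amalgam. -/
def genA : Monoid.PushoutI amalgMaps :=
  Monoid.PushoutI.of true (Multiplicative.ofAdd (1 : ZMod 4) : Multiplicative (ZMod 4))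

/-- The generator of `ℤ/6` in the amalgam. -/
def genB : Monoid.PushoutI amalgMaps :=
  Monoid.PushoutI.of false (Multiplicative.ofAdd (1 : ZMod 6) : Multiplicative (ZMod 6))

lemma amalgHom_genA : amalgHom genA = ModularGroup.S :=
  (Monoid.PushoutI.lift_of vertexHom _ _ _).trans (cyclicHom_one 4 _ (by decide))

lemma amalgHom_genB : amalgHom genB = matB :=
  (Monoid.PushoutI.lift_of vertexHom _ _ _).trans (cyclicHom_one 6 _ (by decide))

lemma genA_pow (n : ℕ) : genA ^ n = Monoid.PushoutI.of (φ := amalgMaps) true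
    (Multiplicative.ofAdd (n : ZMod 4) : Multiplicative (ZMod 4)) :=
  have h : Multiplicative.ofAdd (1 : ZMod 4) ^ n = Multiplicative.ofAdd (n : ZMod 4) := by
    rw [← ofAdd_nsmul]; simp
  (map_pow (Monoid.PushoutI.of (φ := amalgMaps) true) _ n).symm.trans
    (congrArg (Monoid.PushoutI.of (φ := amalgMaps) true) h)

lemma genB_pow (n : ℕ) : genB ^ n = Monoid.PushoutI.of (φ := amalgMaps) false
    (Multiplicative.ofAdd (n : ZMod 6) : Multiplicative (ZMod 6)) :=
  have h : Multiplicative.ofAdd (1 : ZMod 6) ^ n = Multiplicative.ofAdd (n : ZMod 6) := by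
    rw [← ofAdd_nsmul]; simp
  (map_pow (Monoid.PushoutI.of (φ := amalgMaps) false) _ n).symm.trans
    (congrArg (Monoid.PushoutI.of (φ := amalgMaps) false) h)

lemma genA_pow_four : genA ^ 4 = 1 := by
  rw [genA_pow]
  exact map_one (Monoid.PushoutI.of (φ := amalgMaps) true)

lemma genA_sq : genA ^ 2 = genB ^ 3 := by
  rw [genA_pow, genB_pow]
  exact (Monoid.PushoutI.of_apply_eq_base amalgMaps true (Multiplicative.ofAdd 1)).trans
    (Monoid.PushoutI.of_apply_eq_base amalgMaps false (Multiplicative.ofAdd 1)).symm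

lemma closure_gen : Subgroup.closure {genA, genB} = ⊤ := by
  have hA : genA ∈ Subgroup.closure {genA, genB} := Subgroup.subset_closure (by simp)
  have hB : genB ∈ Subgroup.closure {genA, genB} := Subgroup.subset_closure (by simp)
  have hof : ∀ b (g : vertexGroup b),
      Monoid.PushoutI.of (φ := amalgMaps) b g ∈ Subgroup.closure {genA, genB} := by
    rintro (_ | _) g
    · have h : Monoid.PushoutI.of (φ := amalgMaps) false g = genB ^ ZMod.val (n := 6) g := by
        rw [genB_pow]
        exact congrArg (Monoid.PushoutI.of (φ := amalgMaps) false)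
          (ZMod.natCast_zmod_val (n := 6) g).symm
      exact h ▸ pow_mem hB _
    · have h : Monoid.PushoutI.of (φ := amalgMaps) true g = genA ^ ZMod.val (n := 4) g := by
        rw [genA_pow]
        exact congrArg (Monoid.PushoutI.of (φ := amalgMaps) true)
          (ZMod.natCast_zmod_val (n := 4) g).symm
      exact h ▸ pow_mem hA _
  rw [eq_top_iff]
  intro x _
  induction x using Monoid.PushoutI.induction_on with
  | of b g => exact hof b g
  | base h =>
    rw [← Monoid.PushoutI.of_apply_eq_base amalgMaps true]
    exact hof _ _
  | mul x y hx hy => exact mul_mem (hx trivial) (hy trivial)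

lemma amalgHom_surjective : Function.Surjective amalgHom := by
  rw [← MonoidHom.range_eq_top, eq_top_iff, ← SpecialLinearGroup.SL2Z_generators,
    Subgroup.closure_le]
  rintro _ (rfl | rfl)
  · exact ⟨genA, amalgHom_genA⟩
  · refine ⟨genA ^ 2 * (genA * genB), ?_⟩
    simp only [map_mul, map_pow, amalgHom_genA, amalgHom_genB]
    decide

lemma amalgHom_injective : Function.Injective amalgHom := by
  let c : SpecialLinearGroup (Fin 2) ℤ →* Matrix (Fin 2) (Fin 2) ℤ :=
    { toFun := fun A => A, map_one' := rfl, map_mul' := fun _ _ => rfl }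
  refine Function.Injective.of_comp (f := c) ?_
  rw [← MonoidHom.coe_comp]
  refine injective_of_generators genA_pow_four genA_sq closure_gen _ ?_ ?_
  · rw [MonoidHom.comp_apply, amalgHom_genA]; rfl
  · rw [MonoidHom.comp_apply, amalgHom_genB]; rfl

end Amalgam

/-- `SL(2,ℤ)` is isomorphic to the amalgamated free product
`ℤ/4 *_{ℤ/2} ℤ/6`. -/
theorem sl2z_iso_amalgam :
    Nonempty (Matrix.SpecialLinearGroup (Fin 2) ℤ ≃* Monoid.PushoutI amalgMaps) := by
  exact ⟨(MulEquiv.ofBijective amalgHom ⟨amalgHom_injective, amalgHom_surjective⟩).symm⟩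
end
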